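/- Suppose the standing assumptions on f, g, h, Ω, F hold. Let x⋆ ∈ dom(F) and c⋆ := F(x⋆). Then: (a) x⋆ is a local minimizer of F on ℝⁿ (i.e., there is δ > 0 with F(x⋆) ≤ F(x) for all x with ‖x−x⋆‖₂ < δ) if and only if x⋆ is a local minimizer of the function x ↦ f(x) + h(x) − c⋆·g(x) on Ω; (b) x⋆ is a global minimizer of F on ℝⁿ if and only if x⋆ is a global minimizer of x ↦ f(x) + h(x) − c⋆·g(x) on Ω. -/

import Mathlib

open Filter Topology
open scoped RealInnerProductSpace

noncomputable section

/-- The Fréchet subdifferential of an extended-real-valued function `φ` at `x`: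
the set of `y` with `liminf_{z→x, z≠x} (φ z − φ x − ⟨y, z−x⟩)/‖z−x‖ ≥ 0`,
empty when `φ x = +∞`. -/
def fsub {n : ℕ} (φ : EuclideanSpace ℝ (Fin n) → EReal) (x : EuclideanSpace ℝ (Fin n)) :
    Set (EuclideanSpace ℝ (Fin n)) :=
  {y | φ x ≠ ⊤ ∧
    0 ≤ liminf (fun z => (φ z - φ x - ((⟪y, z - x⟫ : ℝ) : EReal)) / ((‖z - x‖ : ℝ) : EReal))
      (𝓝[≠] x)}

/-- The limiting (Mordukhovich) subdifferential. -/
def lsub {n : ℕ} (φ : EuclideanSpace ℝ (Fin n) → EReal) (x : EuclideanSpace ℝ (Fin n)) :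
    Set (EuclideanSpace ℝ (Fin n)) :=
  {y | ∃ u : ℕ → EuclideanSpace ℝ (Fin n), ∃ v : ℕ → EuclideanSpace ℝ (Fin n),
      Tendsto u atTop (𝓝 x) ∧ Tendsto (fun k => φ (u k)) atTop (𝓝 (φ x)) ∧
      (∀ k, v k ∈ fsub φ (u k)) ∧ Tendsto v atTop (𝓝 y)}

/-- The subdifferential of a convex real-valued function. -/
def csub {n : ℕ} (g : EuclideanSpace ℝ (Fin n) → ℝ) (x : EuclideanSpace ℝ (Fin n)) :
    Set (EuclideanSpace ℝ (Fin n)) :=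
  {y | ∀ z, g x + ⟪y, z - x⟫ ≤ g z}

/-- The (possibly set-valued) proximity operator of a proper lsc extended-real-valued
function `ψ` at `u`. -/
def proxSet {n : ℕ} (ψ : EuclideanSpace ℝ (Fin n) → EReal) (u : EuclideanSpace ℝ (Fin n)) :
    Set (EuclideanSpace ℝ (Fin n)) :=
  {y | ∀ z, ψ y + ((‖y - u‖ ^ 2 / 2 : ℝ) : EReal) ≤ ψ z + ((‖z - u‖ ^ 2 / 2 : ℝ) : EReal)}

/-- The fractional objective `F = (f+h)/g` on `Ω ∩ dom f`, `+∞` elsewhere. -/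
def Ffrac {n : ℕ} (f : EuclideanSpace ℝ (Fin n) → EReal) (g h : EuclideanSpace ℝ (Fin n) → ℝ) :
    EuclideanSpace ℝ (Fin n) → EReal :=
  fun x => if g x ≠ 0 ∧ f x ≠ ⊤ then ((((f x).toReal + h x) / g x : ℝ) : EReal) else ⊤

/-- Proposition 3.1: local/global minimizers of the fractional problem coincide with
those of the parametric problem with parameter c⋆ = F(x⋆). -/
theorem fractional_iff_parametric_minimizer
    {n : ℕ} (hn : 1 ≤ n)
    (f : EuclideanSpace ℝ (Fin n) → EReal) (g h : EuclideanSpace ℝ (Fin n) → ℝ)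
    (h' : EuclideanSpace ℝ (Fin n) → EuclideanSpace ℝ (Fin n)) (L : ℝ)
    (hf_ne_bot : ∀ z, f z ≠ ⊥) (hf_proper : ∃ z, f z ≠ ⊤)
    (hf_lsc : LowerSemicontinuous f)
    (hf_bdd : ∃ m : ℝ, ∀ z, (m : EReal) ≤ f z)
    (hf_cont : ContinuousOn f {z | f z ≠ ⊤})
    (hg_cvx : ConvexOn ℝ Set.univ g)
    (hL : 0 < L)
    (hh_grad : ∀ z, HasGradientAt h (h' z) z)
    (hh_lip : LipschitzWith (Real.toNNReal L) h')
    (hΩ : ∃ z, g z ≠ 0)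
    (hfh : ∀ z, 0 ≤ f z + ((h z : ℝ) : EReal))
    (hg_pos : ∀ z, f z ≠ ⊤ → g z ≠ 0 → 0 < g z)
    (xs : EuclideanSpace ℝ (Fin n)) (hxs : g xs ≠ 0 ∧ f xs ≠ ⊤)
    (cs : ℝ) (hcs : cs = (Ffrac f g h xs).toReal) :
    ((∃ δ > (0 : ℝ), ∀ x, ‖x - xs‖ < δ → Ffrac f g h xs ≤ Ffrac f g h x) ↔
      (∃ δ > (0 : ℝ), ∀ x, g x ≠ 0 → ‖x - xs‖ < δ →
        f xs + ((h xs - cs * g xs : ℝ) : EReal) ≤ f x + ((h x - cs * g x : ℝ) : EReal))) ∧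
    ((∀ x, Ffrac f g h xs ≤ Ffrac f g h x) ↔
      (∀ x, g x ≠ 0 →
        f xs + ((h xs - cs * g xs : ℝ) : EReal) ≤ f x + ((h x - cs * g x : ℝ) : EReal))) := by
  have key : ∀ x, (Ffrac f g h xs ≤ Ffrac f g h x) ↔ (g x ≠ 0 →
      f xs + ((h xs - cs * g xs : ℝ) : EReal) ≤ f x + ((h x - cs * g x : ℝ) : EReal)) := by
    have hF : Ffrac f g h xs = ((cs : ℝ) : EReal) := by
      rw [hcs]; unfold Ffrac; rw [if_pos hxs, EReal.toReal_coe]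
    have hc : cs = ((f xs).toReal + h xs) / g xs := by
      rw [hcs]; unfold Ffrac; rw [if_pos hxs, EReal.toReal_coe]
    have h0 : f xs + ((h xs - cs * g xs : ℝ) : EReal) = ((0 : ℝ) : EReal) := by
      rw [← EReal.coe_toReal hxs.2 (hf_ne_bot xs), ← EReal.coe_add]
      congr 1
      have : cs * g xs = (f xs).toReal + h xs := by
        rw [hc]; exact div_mul_cancel₀ _ hxs.1
      linarith
    intro x
    rw [hF, h0]
    by_cases hg : g x = 0
    · simp [Ffrac, hg]
    by_cases hf : f x = ⊤
    · rw [hf, EReal.top_add_coe]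
      simp [Ffrac, hf]
    have hp := hg_pos x hf hg
    unfold Ffrac
    rw [if_pos ⟨hg, hf⟩]
    nth_rewrite 2 [← EReal.coe_toReal hf (hf_ne_bot x)]
    rw [← EReal.coe_add, EReal.coe_le_coe_iff, EReal.coe_le_coe_iff, le_div_iff₀ hp]
    constructor
    · intro h1 _
      linarith
    · intro h1
      have := h1 hg
      linarith
  constructor
  · constructor
    · rintro ⟨δ, hδ, H⟩
      exact ⟨δ, hδ, fun x hx hd => (key x).1 (H x hd) hx⟩
    · rintro ⟨δ, hδ, H⟩
      exact ⟨δ, hδ, fun x hd => (key x).2 (fun hx => H x hx hd)⟩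
  · exact forall_congr' key
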